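/- Let φ be a CNF formula with variables x_1,…,x_l and nonempty clauses c_1,…,c_m. Let G=(V,A,3) be the temporal graph with V = {x_1^p,…,x_l^p} ∪ {x_1^n,…,x_l^n} ∪ {y_1,…,y_l} ∪ {c_1,…,c_m} ∪ {r} and A consisting of: for each α∈{p,n} and i∈[l], the arcs (r,x_i^α,1,2), (r,x_i^α,3,3) and (x_i^α,y_i,2,2); the arc (x_i^p,c_j,2,2) for every clause c_j and variable x_i occurring positively in c_j; and the arc (x_i^n,c_j,2,2) for every clause c_j and variable x_i occurring negatively in c_j. Then φ is satisfiable if and only if there exists an ST-TOSS G'=(V,A',3) with root r of G such that |A'| ≤ 4l+m. -/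

import Mathlib

open scoped Classical

universe u

/-- A temporal arc `(u, v, s, t)`: tail `u`, head `v`, starting time `s`, arrival time `t`. -/
abbrev TArc (α : Type u) := α × α × ℕ × ℕ

/-- The tail vertex of a temporal arc. -/
def TArc.tail {α : Type u} (a : TArc α) : α := a.1

/-- The head vertex of a temporal arc. -/
def TArc.head {α : Type u} (a : TArc α) : α := a.2.1

/-- The starting time of a temporal arc. -/
def TArc.ts {α : Type u} (a : TArc α) : ℕ := a.2.2.1

/-- The arrival time of a temporal arc. -/
def TArc.ta {α : Type u} (a : TArc α) : ℕ := a.2.2.2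

/-- The elapsed time of a temporal arc. -/
def TArc.el {α : Type u} (a : TArc α) : ℕ := TArc.ta a - TArc.ts a

/-- A temporal graph `(V, A, τ)`. -/
structure TempGraph (α : Type u) where
  V : Finset α
  A : Finset (TArc α)
  τ : ℕ
  nonempty : V.Nonempty
  valid : ∀ a ∈ A, TArc.tail a ∈ V ∧ TArc.head a ∈ V ∧ TArc.tail a ≠ TArc.head a ∧
      1 ≤ TArc.ts a ∧ TArc.ts a ≤ TArc.ta a ∧ TArc.ta a ≤ τ

variable {α : Type u}

/-- `IsWalk S u v L` : `L` is the list of arcs of a temporal `(u,v)`-walk using arcs from `S`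
(the trivial walk, `L = []`, requires `u = v`). -/
def IsWalk (S : Finset (TArc α)) : α → α → List (TArc α) → Prop
  | u, v, [] => u = v
  | u, v, a :: L => a ∈ S ∧ TArc.tail a = u ∧ (∀ b ∈ L.head?, TArc.ta a ≤ TArc.ts b) ∧
      IsWalk S (TArc.head a) v L

/-- The starting time of a walk (`0` for the trivial walk). -/
def tsW (L : List (TArc α)) : ℕ := (L.map TArc.ts).headI

/-- The arrival time of a walk (`0` for the trivial walk). -/
def taW (L : List (TArc α)) : ℕ := (L.map TArc.ta).getLastD 0

/-- The duration of a walk. -/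
def durW (L : List (TArc α)) : ℕ := taW L - tsW L

/-- The travelling time of a walk. -/
def ttW (L : List (TArc α)) : ℕ := (L.map TArc.el).sum

/-- The waiting time of a walk. -/
def waitW (L : List (TArc α)) : ℕ :=
  (List.zipWith (fun a b => TArc.ts b - TArc.ta a) L L.tail).sum

/-- The final vertex of a walk starting at `u` with arc list `L`. -/
def endv (u : α) (L : List (TArc α)) : α := (L.map TArc.head).getLastD u

/-- The sequence of vertices of a walk starting at `u` with arc list `L`. -/
def verts (u : α) (L : List (TArc α)) : List α := u :: L.map TArc.head

/-- A walk is a (temporal) path when its vertices are pairwise distinct. -/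
def IsPathList (u : α) (L : List (TArc α)) : Prop := (verts u L).Nodup

/-- The six optimisation criteria: earliest arrival, fastest time, latest departure,
minimum transfers, minimum waiting time, shortest travelling time. -/
inductive DistKind : Type
  | EA | FT | LD | MT | MW | ST
  deriving DecidableEq

/-- The value of a walk for each criterion. -/
def wval : DistKind → List (TArc α) → ℕ
  | .EA, L => taW L
  | .FT, L => durW L
  | .LD, L => tsW L
  | .MT, L => L.length
  | .MW, L => waitW L
  | .ST, L => ttW L

/-- `Realizes d S u v L` : `L` is a temporal `(u,v)`-walk within `S` attaining the optimum
(minimum, or maximum for `LD`) of the criterion `d` among all temporal `(u,v)`-walks in `S`. -/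
def Realizes (d : DistKind) (S : Finset (TArc α)) (u v : α) (L : List (TArc α)) : Prop :=
  IsWalk S u v L ∧ ∀ L', IsWalk S u v L' →
    if d = DistKind.LD then wval d L' ≤ wval d L else wval d L ≤ wval d L'

/-- The distance value `d_G(u,v) ∈ ℕ∞` (`+∞` when `v` is not temporally reachable from `u`;
`LD_G(u,u) = τ + 1`). -/
noncomputable def distVal (d : DistKind) (G : TempGraph α) (u v : α) : ℕ∞ :=
  if d = DistKind.LD then
    (if u = v then ((G.τ : ℕ∞) + 1)
     else if ∃ L, IsWalk G.A u v L then
       sSup {n : ℕ∞ | ∃ L, IsWalk G.A u v L ∧ n = (tsW L : ℕ∞)}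
     else ⊤)
  else sInf {n : ℕ∞ | ∃ L, IsWalk G.A u v L ∧ n = (wval d L : ℕ∞)}

/-- Every vertex of `Vs` is temporally reachable from `r` using arcs from `S`. -/
def ReachAll (S : Finset (TArc α)) (Vs : Finset α) (r : α) : Prop :=
  ∀ v ∈ Vs, ∃ L, IsWalk S r v L

/-- `B` is a temporal out-branching (TOB) with root `r`: its arc set is a minimal set of
temporal arcs such that every vertex of `B` is temporally reachable from `r`. -/
def IsTOB (B : TempGraph α) (r : α) : Prop :=
  r ∈ B.V ∧ ReachAll B.A B.V r ∧ ∀ S ⊂ B.A, ¬ ReachAll S B.V r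

/-- `B` is a temporal subgraph of `G`. -/
def IsSubgraph (B G : TempGraph α) : Prop :=
  B.V ⊆ G.V ∧ B.A ⊆ G.A ∧ B.τ ≤ G.τ

/-- `B` is a `d`-TOB of `G` rooted at `r`. -/
def IsDTOB (d : DistKind) (G B : TempGraph α) (r : α) : Prop :=
  IsTOB B r ∧ IsSubgraph B G ∧ ∀ v ∈ B.V, distVal d B r v = distVal d G r v

/-- `B` is a spanning `d`-TOB of `G` rooted at `r`. -/
def IsSpanningDTOB (d : DistKind) (G B : TempGraph α) (r : α) : Prop :=
  IsDTOB d G B r ∧ B.V = G.V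

/-- `B` is a maximum `d`-TOB of `G` rooted at `r`. -/
def IsMaxDTOB (d : DistKind) (G B : TempGraph α) (r : α) : Prop :=
  IsDTOB d G B r ∧ ∀ B', IsDTOB d G B' r → B'.V.card ≤ B.V.card

/-- The in-degree of `v` with respect to the arc set `S`. -/
noncomputable def inDeg (S : Finset (TArc α)) (v : α) : ℕ :=
  (S.filter fun a => TArc.head a = v).card

/-- A walk in a (static) digraph with arc set `E`. -/
def IsDWalk (E : Finset (α × α)) : α → α → List (α × α) → Prop
  | u, v, [] => u = v
  | u, v, e :: L => e ∈ E ∧ e.1 = u ∧ IsDWalk E e.2 v L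

/-- The digraph `(Vs, E)` is an out-branching with root `r`: every `v ∈ Vs` is the end of
a unique `(r,v)`-walk. -/
def IsOutBranching (Vs : Finset α) (E : Finset (α × α)) (r : α) : Prop :=
  ∀ v ∈ Vs, ∃! L, IsDWalk E r v L

/-- The arc of the underlying multidigraph corresponding to a temporal arc. -/
def proj (a : TArc α) : α × α := (TArc.tail a, TArc.head a)

/-- The temporal subgraph of `G` induced by a set of vertices `Z`. -/
noncomputable def induced (G : TempGraph α) (Z : Finset α) (hne : Z.Nonempty) (hZ : Z ⊆ G.V) :
    TempGraph α where
  V := Z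
  A := G.A.filter fun a => TArc.tail a ∈ Z ∧ TArc.head a ∈ Z
  τ := G.τ
  nonempty := hne
  valid := by
    intro a ha
    simp only [Finset.mem_filter] at ha
    obtain ⟨haA, h1, h2⟩ := ha
    obtain ⟨-, -, h3, h4, h5, h6⟩ := G.valid a haA
    exact ⟨h1, h2, h3, h4, h5, h6⟩

/-- The reverse of a temporal arc with respect to lifetime `τ`. -/
def TArc.rev (τ : ℕ) (a : TArc α) : TArc α :=
  (TArc.head a, TArc.tail a, τ + 1 - TArc.ta a, τ + 1 - TArc.ts a)

/-- The reverse of a temporal graph. -/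
noncomputable def TempGraph.rev (G : TempGraph α) : TempGraph α where
  V := G.V
  A := G.A.image (TArc.rev G.τ)
  τ := G.τ
  nonempty := G.nonempty
  valid := by
    intro b hb
    simp only [Finset.mem_image] at hb
    obtain ⟨a, ha, rfl⟩ := hb
    obtain ⟨h1, h2, h3, h4, h5, h6⟩ := G.valid a ha
    refine ⟨h2, h1, Ne.symm h3, ?_, ?_, ?_⟩ <;>
      simp only [TArc.rev, TArc.tail, TArc.head, TArc.ts, TArc.ta] at * <;> omega

/-- The reverse of a temporal walk. -/
def revWalk (τ : ℕ) (L : List (TArc α)) : List (TArc α) := (L.map (TArc.rev τ)).reverse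

/-- Every vertex of `Vs` temporally reaches `r` using arcs from `S`. -/
def CoReachAll (S : Finset (TArc α)) (Vs : Finset α) (r : α) : Prop :=
  ∀ v ∈ Vs, ∃ L, IsWalk S v r L

/-- `B` is a temporal in-branching (TIB) with root `r`. -/
def IsTIB (B : TempGraph α) (r : α) : Prop :=
  r ∈ B.V ∧ CoReachAll B.A B.V r ∧ ∀ S ⊂ B.A, ¬ CoReachAll S B.V r

/-- `B` is a `d`-TIB of `G` rooted at `r`. -/
def IsDTIB (d : DistKind) (G B : TempGraph α) (r : α) : Prop :=
  IsTIB B r ∧ IsSubgraph B G ∧ ∀ v ∈ B.V, distVal d B v r = distVal d G v r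

/-- `B` is a maximum `d`-TIB of `G` rooted at `r`. -/
def IsMaxDTIB (d : DistKind) (G B : TempGraph α) (r : α) : Prop :=
  IsDTIB d G B r ∧ ∀ B', IsDTIB d G B' r → B'.V.card ≤ B.V.card

/-- The reverse of a temporal subgraph, with respect to the ambient lifetime `τ`. -/
noncomputable def revSub (τ : ℕ) (B : TempGraph α) (h : B.τ ≤ τ) : TempGraph α where
  V := B.V
  A := B.A.image (TArc.rev τ)
  τ := τ
  nonempty := B.nonempty
  valid := by
    intro b hb
    simp only [Finset.mem_image] at hb
    obtain ⟨a, ha, rfl⟩ := hb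
    obtain ⟨h1, h2, h3, h4, h5, h6⟩ := B.valid a ha
    refine ⟨h2, h1, Ne.symm h3, ?_, ?_, ?_⟩ <;>
      simp only [TArc.rev, TArc.tail, TArc.head, TArc.ts, TArc.ta] at * <;> omega

/-- `L` (a walk from `u`) is `d`-prefix-optimal: every prefix of it realizes the distance `d`
from `u` to the end vertex of the prefix. -/
def PrefixOptimal (d : DistKind) (S : Finset (TArc α)) (u : α) (L : List (TArc α)) : Prop :=
  ∀ h ≤ L.length, Realizes d S u (endv u (L.take h)) (L.take h)

/-- `EAd_G(u,v)`: the minimum arrival time among the walks realizing `d_G(u,v)`. -/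
noncomputable def eaVal (d : DistKind) (G : TempGraph α) (u v : α) : ℕ∞ :=
  sInf {n : ℕ∞ | ∃ L, Realizes d G.A u v L ∧ n = (taW L : ℕ∞)}

/-- `G'` is a `d`-temporal out-spanning subgraph (d-TOSS) with root `r` of `G`. -/
def IsDTOSS (d : DistKind) (G G' : TempGraph α) (r : α) : Prop :=
  IsSubgraph G' G ∧ G'.V = G.V ∧
    ∀ v ∈ G.V, ∃ L, IsWalk G'.A r v L ∧ Realizes d G.A r v L

/-- Satisfiability of a CNF formula given by the positive/negative occurrence sets
of its clauses. -/
def Satisfiable (n m : ℕ) (pos neg : Fin m → Finset (Fin n)) : Prop :=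
  ∃ σ : Fin n → Bool, ∀ j : Fin m, (∃ i ∈ pos j, σ i = true) ∨ ∃ i ∈ neg j, σ i = false

/-- Vertex set of the reduction: `x_i^p`, `x_i^n`, `y_i`, clauses `c_j`, and the root `r`. -/
abbrev V17 (l m : ℕ) := Sum (Fin l) (Sum (Fin l) (Sum (Fin l) (Sum (Fin m) Unit)))

def xp17 (l m : ℕ) (i : Fin l) : V17 l m := Sum.inl i
def xn17 (l m : ℕ) (i : Fin l) : V17 l m := Sum.inr (Sum.inl i)
def y17 (l m : ℕ) (i : Fin l) : V17 l m := Sum.inr (Sum.inr (Sum.inl i))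
def c17 (l m : ℕ) (j : Fin m) : V17 l m := Sum.inr (Sum.inr (Sum.inr (Sum.inl j)))
def rt17 (l m : ℕ) : V17 l m := Sum.inr (Sum.inr (Sum.inr (Sum.inr ())))

/-- The temporal graph of the reduction of Theorem `thm:TSS_hard`: for each `α ∈ {p,n}` and
`i`, the arcs `(r,x_i^α,1,2)`, `(r,x_i^α,3,3)`, `(x_i^α,y_i,2,2)`; the arc `(x_i^p,c_j,2,2)`
when `x_i` occurs positively in `c_j`, and `(x_i^n,c_j,2,2)` when `x_i` occurs negatively in
`c_j`; the lifetime is 3. -/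
noncomputable def G17 (l m : ℕ) (pos neg : Fin m → Finset (Fin l)) :
    TempGraph (V17 l m) where
  V := Finset.univ
  A :=
    (Finset.univ.image fun i : Fin l => ((rt17 l m, xp17 l m i, 1, 2) : TArc (V17 l m)))
    ∪ (Finset.univ.image fun i : Fin l => ((rt17 l m, xn17 l m i, 1, 2) : TArc (V17 l m)))
    ∪ (Finset.univ.image fun i : Fin l => ((rt17 l m, xp17 l m i, 3, 3) : TArc (V17 l m)))
    ∪ (Finset.univ.image fun i : Fin l => ((rt17 l m, xn17 l m i, 3, 3) : TArc (V17 l m)))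
    ∪ (Finset.univ.image fun i : Fin l => ((xp17 l m i, y17 l m i, 2, 2) : TArc (V17 l m)))
    ∪ (Finset.univ.image fun i : Fin l => ((xn17 l m i, y17 l m i, 2, 2) : TArc (V17 l m)))
    ∪ (Finset.univ.biUnion fun j : Fin m =>
        ((pos j).image fun i => ((xp17 l m i, c17 l m j, 2, 2) : TArc (V17 l m)))
        ∪ ((neg j).image fun i => ((xn17 l m i, c17 l m j, 2, 2) : TArc (V17 l m))))
  τ := 3
  nonempty := ⟨rt17 l m, Finset.mem_univ _⟩
  valid := by
    intro a ha
    simp only [Finset.mem_union, Finset.mem_image, Finset.mem_biUnion, Finset.mem_univ,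
      true_and] at ha
    rcases ha with ((((((⟨i, rfl⟩ | ⟨i, rfl⟩) | ⟨i, rfl⟩) | ⟨i, rfl⟩) | ⟨i, rfl⟩)
        | ⟨i, rfl⟩) | ⟨j, (⟨i, -, rfl⟩ | ⟨i, -, rfl⟩)⟩) <;>
      exact ⟨Finset.mem_univ _, Finset.mem_univ _,
        by simp [TArc.tail, TArc.head, xp17, xn17, y17, c17, rt17],
        by norm_num [TArc.ts], by norm_num [TArc.ts, TArc.ta], by norm_num [TArc.ta]⟩

/-! Every arc into a literal vertex is either fast (`3 → 3`, elapsed time `0`) or slow (`1 → 2`). A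
shortest walk to a literal vertex is its fast arc, while a walk to `y_i` or `c_j` leaves a literal
vertex at time `2` and so has to enter it by the slow arc. An ST-TOSS thus contains the `2l` fast
arcs, for each `i` a slow arc and an arc into `y_i`, and for each `j` an arc into `c_j`: this is
already `4l + m` arcs. If there are no others, there is exactly one slow arc per variable, that is a
truth assignment, and the arc into `c_j` comes from a literal which this assignment makes true. -/

theorem IsWalk.mono {S T : Finset (TArc α)} (hST : S ⊆ T) {u v : α} {L : List (TArc α)}
    (h : IsWalk S u v L) : IsWalk T u v L := by
  induction L generalizing u with
  | nil => exact h
  | cons a L ih => exact ⟨hST h.1, h.2.1, h.2.2.1, ih h.2.2.2⟩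

theorem isWalk_concat_iff {S : Finset (TArc α)} {u v : α} {L : List (TArc α)} {a : TArc α} :
    IsWalk S u v (L ++ [a]) ↔
      IsWalk S u a.tail L ∧ (∀ b ∈ L.getLast?, b.ta ≤ a.ts) ∧ a ∈ S ∧ a.head = v := by
  induction L generalizing u with
  | nil =>
    exact ⟨fun ⟨ha, hu, _, hv⟩ => ⟨hu.symm, nofun, ha, hv⟩,
      fun ⟨hu, _, ha, hv⟩ => ⟨ha, hu.symm, nofun, hv⟩⟩
  | cons b L ih =>
    simp only [List.cons_append, IsWalk, ih]
    cases L with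
    | nil =>
      simp only [List.nil_append, List.head?_cons, List.head?_nil, List.getLast?_nil,
        List.getLast?_singleton, Option.mem_def, Option.some.injEq, forall_eq', reduceCtorEq,
        IsEmpty.forall_iff, implies_true, true_and]
      tauto
    | cons c L =>
      simp only [List.cons_append, List.head?_cons, List.getLast?_cons_cons]
      tauto

theorem IsWalk.exists_concat_of_ne {S : Finset (TArc α)} {u v : α} {L : List (TArc α)}
    (h : IsWalk S u v L) (huv : u ≠ v) :
    ∃ K a, L = K ++ [a] ∧ IsWalk S u a.tail K ∧ (∀ b ∈ K.getLast?, b.ta ≤ a.ts) ∧ a ∈ S ∧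
      a.head = v := by
  rcases List.eq_nil_or_concat L with rfl | ⟨K, a, rfl⟩
  · exact absurd h huv
  · rw [List.concat_eq_append] at *
    exact ⟨K, a, rfl, isWalk_concat_iff.1 h⟩

theorem IsWalk.eq_nil_of_forall_head_ne {S : Finset (TArc α)} {u v : α} {L : List (TArc α)}
    (h : IsWalk S u v L) (hv : ∀ a ∈ S, a.head ≠ v) : L = [] := by
  rcases List.eq_nil_or_concat L with rfl | ⟨K, a, rfl⟩
  · rfl
  · rw [List.concat_eq_append, isWalk_concat_iff] at h
    exact absurd h.2.2.2 (hv a h.2.2.1)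

/-- Some walk from `u` to `v` using only arcs of `S` realizes the `d`-distance from `u` to `v` with
respect to the larger arc set `T`: the condition that a `d`-TOSS imposes at each vertex. -/
def Attains (d : DistKind) (S T : Finset (TArc α)) (u v : α) : Prop :=
  ∃ L, IsWalk S u v L ∧ Realizes d T u v L

theorem attains_ST_iff {S T : Finset (TArc α)} (hST : S ⊆ T) {u v : α} :
    Attains .ST S T u v ↔ ∃ L, IsWalk S u v L ∧ ∀ L', IsWalk T u v L' → ttW L ≤ ttW L' :=
  ⟨fun ⟨L, hL, _, hmin⟩ => ⟨L, hL, by simpa [wval] using hmin⟩,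
    fun ⟨L, hL, hmin⟩ => ⟨L, hL, hL.mono hST, by simpa [wval] using hmin⟩⟩

theorem attains_iff_exists_isWalk {d : DistKind} {S T : Finset (TArc α)} (hST : S ⊆ T) {u v : α}
    {k : ℕ} (hk : ∀ L, IsWalk T u v L → wval d L = k) :
    Attains d S T u v ↔ ∃ L, IsWalk S u v L := by
  refine ⟨fun ⟨L, hL, _⟩ => ⟨L, hL⟩, fun ⟨L, hL⟩ => ⟨L, hL, hL.mono hST, fun L' hL' => ?_⟩⟩
  rw [hk L (hL.mono hST), hk L' hL', ite_self]

theorem exists_isDTOSS_card_le_iff {d : DistKind} {G : TempGraph α} {r : α} {k : ℕ} :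
    (∃ G', IsDTOSS d G G' r ∧ G'.τ = G.τ ∧ G'.A.card ≤ k) ↔
      ∃ S ⊆ G.A, (∀ v ∈ G.V, Attains d S G.A r v) ∧ S.card ≤ k := by
  constructor
  · rintro ⟨G', ⟨⟨-, hA, -⟩, -, hreal⟩, -, hcard⟩
    exact ⟨G'.A, hA, hreal, hcard⟩
  · rintro ⟨S, hS, hreal, hcard⟩
    exact ⟨⟨G.V, S, G.τ, G.nonempty, fun a ha => G.valid a (hS ha)⟩,
      ⟨⟨subset_rfl, hS, le_rfl⟩, rfl, hreal⟩, rfl, hcard⟩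

namespace G17

variable {l m : ℕ} {pos neg : Fin m → Finset (Fin l)}

/-- The variables whose literal of sign `b` occurs in the clause `j`. -/
def occ (pos neg : Fin m → Finset (Fin l)) (b : Bool) (j : Fin m) : Finset (Fin l) :=
  bif b then pos j else neg j

theorem satisfiable_iff_exists_occ :
    Satisfiable l m pos neg ↔
      ∃ (σ : Fin l → Bool) (d : Fin m → Fin l), ∀ j, d j ∈ occ pos neg (σ (d j)) j := by
  refine exists_congr fun σ => Iff.trans (forall_congr' fun j => ?_)
    (Classical.skolem (p := fun j i => i ∈ occ pos neg (σ i) j))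
  constructor
  · rintro (⟨i, hi, hσ⟩ | ⟨i, hi, hσ⟩) <;> exact ⟨i, by simpa [occ, hσ] using hi⟩
  · rintro ⟨i, hi⟩
    cases hσ : σ i <;> rw [hσ] at hi
    exacts [Or.inr ⟨i, hi, hσ⟩, Or.inl ⟨i, hi, hσ⟩]

/-- The vertex of the literal of sign `b` over the variable `i`. -/
def lit (b : Bool) (i : Fin l) : V17 l m := bif b then xp17 l m i else xn17 l m i

theorem lit_inj {b b' : Bool} {i i' : Fin l} :
    (lit b i : V17 l m) = lit b' i' ↔ b = b' ∧ i = i' := by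
  cases b <;> cases b' <;> simp [lit, xp17, xn17]

theorem lit_ne_rt17 (b : Bool) (i : Fin l) : lit b i ≠ rt17 l m := by
  cases b <;> simp [lit, xp17, xn17, rt17]

theorem lit_ne_y17 (b : Bool) (i i' : Fin l) : lit b i ≠ y17 l m i' := by
  cases b <;> simp [lit, xp17, xn17, y17]

theorem lit_ne_c17 (b : Bool) (i : Fin l) (j : Fin m) : lit b i ≠ c17 l m j := by
  cases b <;> simp [lit, xp17, xn17, c17]

theorem forall_vertex_iff {p : V17 l m → Prop} :
    (∀ v, p v) ↔
      p (rt17 l m) ∧ (∀ b i, p (lit b i)) ∧ (∀ i, p (y17 l m i)) ∧ ∀ j, p (c17 l m j) := by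
  constructor
  · exact fun h => ⟨h _, fun _ _ => h _, fun _ => h _, fun _ => h _⟩
  · rintro ⟨root, lit, y, c⟩ (i | i | i | j | _)
    exacts [lit true i, lit false i, y i, c j, root]

/-- The arc from the root to a literal vertex with elapsed time `0`, arriving too late to continue
the walk. -/
def fastArc (b : Bool) (i : Fin l) : TArc (V17 l m) := (rt17 l m, lit b i, 3, 3)

/-- The arc from the root to a literal vertex with elapsed time `1`, arriving in time to continue
the walk. -/
def slowArc (b : Bool) (i : Fin l) : TArc (V17 l m) := (rt17 l m, lit b i, 1, 2)

/-- The arc from a literal vertex to the vertex `y_i` of its variable. -/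
def varArc (b : Bool) (i : Fin l) : TArc (V17 l m) := (lit b i, y17 l m i, 2, 2)

/-- The arc from a literal vertex to the vertex of the clause `j`; it belongs to the graph only if
the literal occurs in that clause. -/
def clauseArc (b : Bool) (i : Fin l) (j : Fin m) : TArc (V17 l m) := (lit b i, c17 l m j, 2, 2)

theorem mem_A_iff {a : TArc (V17 l m)} :
    a ∈ (G17 l m pos neg).A ↔
      (∃ b i, a = fastArc b i) ∨ (∃ b i, a = slowArc b i) ∨ (∃ b i, a = varArc b i) ∨
        ∃ b i j, i ∈ occ pos neg b j ∧ a = clauseArc b i j := by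
  simp only [G17, Finset.mem_union, Finset.mem_image, Finset.mem_biUnion, Finset.mem_univ,
    true_and, Bool.exists_bool, fastArc, slowArc, varArc, clauseArc, occ, lit, cond_true,
    cond_false, exists_or, eq_comm (b := a), exists_comm (α := Fin m)]
  exact Iff.of_eq (by ac_rfl)

theorem fastArc_mem_A (b : Bool) (i : Fin l) : fastArc b i ∈ (G17 l m pos neg).A :=
  mem_A_iff.2 (.inl ⟨b, i, rfl⟩)

theorem slowArc_mem_A (b : Bool) (i : Fin l) : slowArc b i ∈ (G17 l m pos neg).A :=
  mem_A_iff.2 (.inr (.inl ⟨b, i, rfl⟩))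

theorem varArc_mem_A (b : Bool) (i : Fin l) : varArc b i ∈ (G17 l m pos neg).A :=
  mem_A_iff.2 (.inr (.inr (.inl ⟨b, i, rfl⟩)))

theorem clauseArc_mem_A_iff {b : Bool} {i : Fin l} {j : Fin m} :
    clauseArc b i j ∈ (G17 l m pos neg).A ↔ i ∈ occ pos neg b j := by
  simp [mem_A_iff, fastArc, slowArc, varArc, clauseArc, lit_inj, y17, c17]

theorem head_ne_rt17 {a : TArc (V17 l m)} (ha : a ∈ (G17 l m pos neg).A) :
    a.head ≠ rt17 l m := by
  rcases mem_A_iff.1 ha with ⟨b, i, rfl⟩ | ⟨b, i, rfl⟩ | ⟨b, i, rfl⟩ | ⟨b, i, j, -, rfl⟩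
  exacts [lit_ne_rt17 b i, lit_ne_rt17 b i, by simp [TArc.head, varArc, y17, rt17],
    by simp [TArc.head, clauseArc, c17, rt17]]

theorem eq_fastArc_or_eq_slowArc_of_head_eq {a : TArc (V17 l m)} (ha : a ∈ (G17 l m pos neg).A)
    {b : Bool} {i : Fin l} (h : a.head = lit b i) : a = fastArc b i ∨ a = slowArc b i := by
  rcases mem_A_iff.1 ha with ⟨b', i', rfl⟩ | ⟨b', i', rfl⟩ | ⟨b', i', rfl⟩ | ⟨b', i', j, -, rfl⟩
  · obtain ⟨rfl, rfl⟩ := lit_inj.1 h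
    exact .inl rfl
  · obtain ⟨rfl, rfl⟩ := lit_inj.1 h
    exact .inr rfl
  · exact absurd h.symm (lit_ne_y17 b i i')
  · exact absurd h.symm (lit_ne_c17 b i j)

theorem exists_eq_varArc_of_head_eq {a : TArc (V17 l m)} (ha : a ∈ (G17 l m pos neg).A)
    {i : Fin l} (h : a.head = y17 l m i) : ∃ b, a = varArc b i := by
  rcases mem_A_iff.1 ha with ⟨b, i', rfl⟩ | ⟨b, i', rfl⟩ | ⟨b, i', rfl⟩ | ⟨b, i', j, -, rfl⟩
  · exact absurd h (lit_ne_y17 b i' i)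
  · exact absurd h (lit_ne_y17 b i' i)
  · obtain rfl : i' = i := by simpa [TArc.head, varArc, y17] using h
    exact ⟨b, rfl⟩
  · simp [TArc.head, clauseArc, y17, c17] at h

theorem exists_eq_clauseArc_of_head_eq {a : TArc (V17 l m)} (ha : a ∈ (G17 l m pos neg).A)
    {j : Fin m} (h : a.head = c17 l m j) : ∃ b i, a = clauseArc b i j := by
  rcases mem_A_iff.1 ha with ⟨b, i, rfl⟩ | ⟨b, i, rfl⟩ | ⟨b, i, rfl⟩ | ⟨b, i, j', -, rfl⟩
  · exact absurd h (lit_ne_c17 b i j)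
  · exact absurd h (lit_ne_c17 b i j)
  · simp [TArc.head, varArc, y17, c17] at h
  · obtain rfl : j' = j := by simpa [TArc.head, clauseArc, c17] using h
    exact ⟨b, i, rfl⟩

variable {S : Finset (TArc (V17 l m))} {L : List (TArc (V17 l m))}

theorem isWalk_lit_iff (hS : S ⊆ (G17 l m pos neg).A) {b : Bool} {i : Fin l} :
    IsWalk S (rt17 l m) (lit b i) L ↔
      (fastArc b i ∈ S ∧ L = [fastArc b i]) ∨ (slowArc b i ∈ S ∧ L = [slowArc b i]) := by
  constructor
  · intro h
    obtain ⟨K, a, rfl, hK, -, ha, hhead⟩ := h.exists_concat_of_ne (lit_ne_rt17 b i).symm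
    have hK_nil (hrt : a.tail = rt17 l m) : K = [] :=
      hK.eq_nil_of_forall_head_ne fun a' ha' => hrt ▸ head_ne_rt17 (hS ha')
    rcases eq_fastArc_or_eq_slowArc_of_head_eq (hS ha) hhead with rfl | rfl
    · exact .inl ⟨ha, by rw [hK_nil rfl, List.nil_append]⟩
    · exact .inr ⟨ha, by rw [hK_nil rfl, List.nil_append]⟩
  · rintro (⟨ha, rfl⟩ | ⟨ha, rfl⟩) <;> exact ⟨ha, rfl, by simp, rfl⟩

theorem isWalk_lit_and_ta_le_two_iff (hS : S ⊆ (G17 l m pos neg).A) {b : Bool} {i : Fin l} :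
    (IsWalk S (rt17 l m) (lit b i) L ∧ ∀ a ∈ L.getLast?, a.ta ≤ 2) ↔
      slowArc b i ∈ S ∧ L = [slowArc b i] := by
  rw [isWalk_lit_iff hS]
  constructor
  · rintro ⟨⟨-, rfl⟩ | hslow, hta⟩
    · simp [fastArc, TArc.ta] at hta
    · exact hslow
  · rintro ⟨ha, rfl⟩
    exact ⟨.inr ⟨ha, rfl⟩, by simp [slowArc, TArc.ta]⟩

theorem isWalk_y17_iff (hS : S ⊆ (G17 l m pos neg).A) {i : Fin l} :
    IsWalk S (rt17 l m) (y17 l m i) L ↔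
      ∃ b, slowArc b i ∈ S ∧ varArc b i ∈ S ∧ L = [slowArc b i, varArc b i] := by
  constructor
  · intro h
    obtain ⟨K, a, rfl, hK, hta, ha, hhead⟩ :=
      h.exists_concat_of_ne (by simp [rt17, y17])
    obtain ⟨b, rfl⟩ := exists_eq_varArc_of_head_eq (hS ha) hhead
    obtain ⟨hslow, rfl⟩ := (isWalk_lit_and_ta_le_two_iff hS).1 ⟨hK, hta⟩
    exact ⟨b, hslow, ha, rfl⟩
  · rintro ⟨b, hslow, ha, rfl⟩
    obtain ⟨hK, hta⟩ := (isWalk_lit_and_ta_le_two_iff hS).2 ⟨hslow, rfl⟩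
    exact (isWalk_concat_iff (L := [slowArc b i])).2 ⟨hK, hta, ha, rfl⟩

theorem isWalk_c17_iff (hS : S ⊆ (G17 l m pos neg).A) {j : Fin m} :
    IsWalk S (rt17 l m) (c17 l m j) L ↔
      ∃ b i, slowArc b i ∈ S ∧ clauseArc b i j ∈ S ∧ L = [slowArc b i, clauseArc b i j] := by
  constructor
  · intro h
    obtain ⟨K, a, rfl, hK, hta, ha, hhead⟩ :=
      h.exists_concat_of_ne (by simp [rt17, c17])
    obtain ⟨b, i, rfl⟩ := exists_eq_clauseArc_of_head_eq (hS ha) hhead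
    obtain ⟨hslow, rfl⟩ := (isWalk_lit_and_ta_le_two_iff hS).1 ⟨hK, hta⟩
    exact ⟨b, i, hslow, ha, rfl⟩
  · rintro ⟨b, i, hslow, ha, rfl⟩
    obtain ⟨hK, hta⟩ := (isWalk_lit_and_ta_le_two_iff hS).2 ⟨hslow, rfl⟩
    exact (isWalk_concat_iff (L := [slowArc b i])).2 ⟨hK, hta, ha, rfl⟩

theorem attains_rt17 (hS : S ⊆ (G17 l m pos neg).A) :
    Attains .ST S (G17 l m pos neg).A (rt17 l m) (rt17 l m) :=
  (attains_ST_iff hS).2 ⟨[], rfl, fun _ _ => Nat.zero_le _⟩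

theorem attains_lit_iff (hS : S ⊆ (G17 l m pos neg).A) {b : Bool} {i : Fin l} :
    Attains .ST S (G17 l m pos neg).A (rt17 l m) (lit b i) ↔ fastArc b i ∈ S := by
  have tt_fast : ttW [(fastArc b i : TArc (V17 l m))] = 0 := rfl
  have tt_slow : ttW [(slowArc b i : TArc (V17 l m))] = 1 := rfl
  rw [attains_ST_iff hS]
  constructor
  · rintro ⟨L, hL, hmin⟩
    have hle := hmin _ ((isWalk_lit_iff subset_rfl).2 (.inl ⟨fastArc_mem_A b i, rfl⟩))
    rcases (isWalk_lit_iff hS).1 hL with ⟨ha, -⟩ | ⟨-, rfl⟩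
    · exact ha
    · omega
  · intro ha
    exact ⟨_, (isWalk_lit_iff hS).2 (.inl ⟨ha, rfl⟩), fun _ _ => tt_fast ▸ Nat.zero_le _⟩

theorem attains_y17_iff (hS : S ⊆ (G17 l m pos neg).A) {i : Fin l} :
    Attains .ST S (G17 l m pos neg).A (rt17 l m) (y17 l m i) ↔
      ∃ b, slowArc b i ∈ S ∧ varArc b i ∈ S := by
  have tt_eq_one (L) (hL : IsWalk (G17 l m pos neg).A (rt17 l m) (y17 l m i) L) :
      wval .ST L = 1 := by
    obtain ⟨b, -, -, rfl⟩ := (isWalk_y17_iff subset_rfl).1 hL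
    rfl
  rw [attains_iff_exists_isWalk hS tt_eq_one]
  simp only [isWalk_y17_iff hS]
  exact ⟨fun ⟨_, b, hslow, hvar, _⟩ => ⟨b, hslow, hvar⟩,
    fun ⟨b, hslow, hvar⟩ => ⟨_, b, hslow, hvar, rfl⟩⟩

theorem attains_c17_iff (hS : S ⊆ (G17 l m pos neg).A) {j : Fin m} :
    Attains .ST S (G17 l m pos neg).A (rt17 l m) (c17 l m j) ↔
      ∃ b i, slowArc b i ∈ S ∧ clauseArc b i j ∈ S := by
  have tt_eq_one (L) (hL : IsWalk (G17 l m pos neg).A (rt17 l m) (c17 l m j) L) :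
      wval .ST L = 1 := by
    obtain ⟨b, i, -, -, rfl⟩ := (isWalk_c17_iff subset_rfl).1 hL
    rfl
  rw [attains_iff_exists_isWalk hS tt_eq_one]
  simp only [isWalk_c17_iff hS]
  exact ⟨fun ⟨_, b, i, hslow, hclause, _⟩ => ⟨b, i, hslow, hclause⟩,
    fun ⟨b, i, hslow, hclause⟩ => ⟨_, b, i, hslow, hclause, rfl⟩⟩

/-- The arc sets that contain a shortest walk from the root to every vertex, described by the arcs
which they have to contain; see `forall_attains_iff`. -/
structure IsCover (S : Finset (TArc (V17 l m))) : Prop where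
  fast : ∀ b i, fastArc b i ∈ S
  var : ∀ i, ∃ b, slowArc b i ∈ S ∧ varArc b i ∈ S
  clause : ∀ j, ∃ b i, slowArc b i ∈ S ∧ clauseArc b i j ∈ S

theorem forall_attains_iff (hS : S ⊆ (G17 l m pos neg).A) :
    (∀ v ∈ (G17 l m pos neg).V, Attains .ST S (G17 l m pos neg).A (rt17 l m) v) ↔
      IsCover S := by
  have hV (v : V17 l m) : v ∈ (G17 l m pos neg).V := Finset.mem_univ v
  simp only [hV, forall_const, forall_vertex_iff, attains_rt17 hS, attains_lit_iff hS,
    attains_y17_iff hS, attains_c17_iff hS, true_and]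
  exact ⟨fun ⟨fast, var, clause⟩ => ⟨fast, var, clause⟩, fun h => ⟨h.fast, h.var, h.clause⟩⟩

/-- The arcs selected by a sign `σ i` for each variable and a literal, of sign `b j` and over the
variable `d j`, for each clause: all fast arcs, then for each `i` the slow arc to the literal of
sign `σ i` and the arc from there to `y_i`, then for each `j` the arc from the selected literal. -/
def coverArc (σ : Fin l → Bool) (b : Fin m → Bool) (d : Fin m → Fin l) :
    (Bool × Fin l) ⊕ Fin l ⊕ Fin l ⊕ Fin m → TArc (V17 l m)
  | .inl (s, i) => fastArc s i
  | .inr (.inl i) => slowArc (σ i) i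
  | .inr (.inr (.inl i)) => varArc (σ i) i
  | .inr (.inr (.inr j)) => clauseArc (b j) (d j) j

/-- The set of the selected arcs; every `IsCover` set contains such a set. -/
noncomputable def cover (σ : Fin l → Bool) (b : Fin m → Bool) (d : Fin m → Fin l) :
    Finset (TArc (V17 l m)) :=
  Finset.univ.image (coverArc σ b d)

variable {σ : Fin l → Bool} {b : Fin m → Bool} {d : Fin m → Fin l}

theorem coverArc_injective : Function.Injective (coverArc σ b d) := by
  rintro (⟨s, i⟩ | i | i | j) (⟨s', i'⟩ | i' | i' | j') h <;>
    simp_all [coverArc, fastArc, slowArc, varArc, clauseArc, lit_inj, y17, c17]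

theorem card_cover : (cover σ b d).card = 4 * l + m := by
  rw [cover, Finset.card_image_of_injective _ coverArc_injective]
  simp only [Finset.card_univ, Fintype.card_sum, Fintype.card_prod, Fintype.card_bool,
    Fintype.card_fin]
  ring

theorem cover_subset_iff :
    cover σ b d ⊆ S ↔
      (∀ s i, fastArc s i ∈ S) ∧ (∀ i, slowArc (σ i) i ∈ S) ∧ (∀ i, varArc (σ i) i ∈ S) ∧
        ∀ j, clauseArc (b j) (d j) j ∈ S := by
  simp only [cover, Finset.image_subset_iff, Finset.mem_univ, forall_const, Sum.forall,
    Prod.forall, coverArc]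

theorem cover_subset_A_iff :
    cover σ b d ⊆ (G17 l m pos neg).A ↔ ∀ j, d j ∈ occ pos neg (b j) j := by
  simp only [cover_subset_iff, fastArc_mem_A, slowArc_mem_A, varArc_mem_A, clauseArc_mem_A_iff,
    implies_true, true_and]

theorem slowArc_mem_cover_iff {s : Bool} {i : Fin l} : slowArc s i ∈ cover σ b d ↔ σ i = s := by
  simp [cover, coverArc, fastArc, slowArc, varArc, clauseArc, lit_inj, lit_ne_rt17]

theorem isCover_cover : IsCover (cover σ (fun j => σ (d j)) d) := by
  obtain ⟨fast, slow, var, clause⟩ :=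
    cover_subset_iff.1 (subset_refl (cover σ (fun j => σ (d j)) d))
  exact ⟨fast, fun i => ⟨σ i, slow i, var i⟩, fun j => ⟨σ (d j), d j, slow (d j), clause j⟩⟩

theorem IsCover.exists_eq_cover (h : IsCover S) (hcard : S.card ≤ 4 * l + m) :
    ∃ σ d, S = cover σ (fun j => σ (d j)) d := by
  choose σ hslow hvar using h.var
  choose b d hslow_clause hclause using h.clause
  have hsub : cover σ b d ⊆ S := cover_subset_iff.2 ⟨h.fast, hslow, hvar, hclause⟩
  obtain rfl : cover σ b d = S := Finset.eq_of_subset_of_card_le hsub (hcard.trans card_cover.ge)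
  have hsign : (fun j => σ (d j)) = b := funext fun j => slowArc_mem_cover_iff.1 (hslow_clause j)
  exact ⟨σ, d, by rw [hsign]⟩

theorem isCover_and_card_le_iff :
    IsCover S ∧ S.card ≤ 4 * l + m ↔ ∃ σ d, S = cover σ (fun j => σ (d j)) d := by
  constructor
  · exact fun ⟨h, hcard⟩ => h.exists_eq_cover hcard
  · rintro ⟨σ, d, rfl⟩
    exact ⟨isCover_cover, card_cover.le⟩

theorem exists_isCover_card_le_iff :
    (∃ S ⊆ (G17 l m pos neg).A, IsCover S ∧ S.card ≤ 4 * l + m) ↔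
      ∃ (σ : Fin l → Bool) (d : Fin m → Fin l), ∀ j, d j ∈ occ pos neg (σ (d j)) j := by
  simp only [isCover_and_card_le_iff]
  constructor
  · rintro ⟨_, hS, σ, d, rfl⟩
    exact ⟨σ, d, cover_subset_A_iff.1 hS⟩
  · rintro ⟨σ, d, h⟩
    exact ⟨_, cover_subset_A_iff.2 h, σ, d, rfl⟩

end G17

/-- Theorem `thm:TSS_hard`: the CNF formula is satisfiable iff the
reduction graph has an ST-TOSS `G' = (V, A', 3)` with root `r` such that `|A'| ≤ 4l + m`. -/
theorem stmt_17 (l m : ℕ) (pos neg : Fin m → Finset (Fin l))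
    (hne : ∀ j, (pos j ∪ neg j).Nonempty) :
    Satisfiable l m pos neg ↔
      ∃ G' : TempGraph (V17 l m),
        IsDTOSS DistKind.ST (G17 l m pos neg) G' (rt17 l m) ∧ G'.τ = 3 ∧
          G'.A.card ≤ 4 * l + m := by
  rw [G17.satisfiable_iff_exists_occ, ← G17.exists_isCover_card_le_iff]
  refine Iff.trans ?_ exists_isDTOSS_card_le_iff.symm
  exact exists_congr fun S => and_congr_right fun hS =>
    and_congr_left' (G17.forall_attains_iff hS).symm
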